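/- Let K be a field and let n ≥ 0. Then for every k ≥ 0 the weight-k component of the universal enveloping algebra U(K^n) satisfies: dim_K U(K^n)_0 = 1, dim_K U(K^n)_1 = 2n, dim_K U(K^n)_2 = (3n² − n)/2, and dim_K U(K^n)_k = 2·(n choose k) for all k ≥ 3. -/

import Mathlib

/-!
Universal enveloping algebra of the abelian alternative algebra `K^n`.

`T = Tens_K(K^n ⊕ K^n)`; `l_a` (resp. `r_a`) is the image of `(a,0)` (resp. `(0,a)`).
`U(K^n)` is the quotient of `T` by the two-sided ideal generated by
`l_a·l_a`, `r_a·r_a`, `l_b·l_a + r_a·r_b`, `r_b·l_a − l_a·r_b − r_a·r_b`.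
-/

noncomputable section

/-- `l_a ∈ Tens_K(K^n ⊕ K^n)`. -/
def lT (K : Type) [CommRing K] (n : ℕ) (a : Fin n → K) :
    TensorAlgebra K ((Fin n → K) × (Fin n → K)) :=
  TensorAlgebra.ι K (a, 0)

/-- `r_a ∈ Tens_K(K^n ⊕ K^n)`. -/
def rT (K : Type) [CommRing K] (n : ℕ) (a : Fin n → K) :
    TensorAlgebra K ((Fin n → K) × (Fin n → K)) :=
  TensorAlgebra.ι K (0, a)

/-- The relations defining `U(K^n)`: quotienting by this relation is the same as
quotienting by the two-sided ideal generated by the listed elements. -/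
inductive URel (K : Type) [CommRing K] (n : ℕ) :
    TensorAlgebra K ((Fin n → K) × (Fin n → K)) →
    TensorAlgebra K ((Fin n → K) × (Fin n → K)) → Prop
  | ll (a : Fin n → K) : URel K n (lT K n a * lT K n a) 0
  | rr (a : Fin n → K) : URel K n (rT K n a * rT K n a) 0
  | llrr (a b : Fin n → K) : URel K n (lT K n b * lT K n a + rT K n a * rT K n b) 0
  | rl (a b : Fin n → K) :
      URel K n (rT K n b * lT K n a - lT K n a * rT K n b - rT K n a * rT K n b) 0

/-- The universal enveloping algebra `U(K^n)`. -/
def Ualg (K : Type) [CommRing K] (n : ℕ) : Type := RingQuot (URel K n)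

instance (K : Type) [CommRing K] (n : ℕ) : Ring (Ualg K n) :=
  inferInstanceAs (Ring (RingQuot (URel K n)))

instance (K : Type) [CommRing K] (n : ℕ) : Algebra K (Ualg K n) :=
  inferInstanceAs (Algebra K (RingQuot (URel K n)))

/-- Image of `l_a` in `U(K^n)`. -/
def lU (K : Type) [CommRing K] (n : ℕ) (a : Fin n → K) : Ualg K n :=
  RingQuot.mkAlgHom K (URel K n) (lT K n a)

/-- Image of `r_a` in `U(K^n)`. -/
def rU (K : Type) [CommRing K] (n : ℕ) (a : Fin n → K) : Ualg K n :=
  RingQuot.mkAlgHom K (URel K n) (rT K n a)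

/-- The weight-one part `V ⊆ U(K^n)`: the span of all `l_a` and `r_a`. -/
def V (K : Type) [CommRing K] (n : ℕ) : Submodule K (Ualg K n) :=
  Submodule.span K (Set.range (lU K n) ∪ Set.range (rU K n))


/-!
The relations rewrite `l_a l_b = r_a r_b` and `r_b l_a = l_a r_b + r_a r_b`, so in weight `k ≥ 1`
the words `l_a r_b r_c ⋯` and `r_a r_b r_c ⋯` span. The `r_a` anticommute, so the words of the
second kind are the image of an exterior power. In weight at least three the same holds for the
first kind: `l_a r_b r_c = l_a l_b l_c` is alternating in `a, b`, while `r_b r_c ⋯` is alternating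
in `b, c, …`. Hence the dimensions are bounded above by those of `Λᵏ ⊕ Λᵏ` for `k ≥ 3`, and by those
of `(M ⊗ M) ⊕ Λ²` for `k = 2`, where `M = K^n`.

For the lower bounds, send `l_a` and `r_a` to `σ ⊗ a` and `τ ⊗ a` in `M₂(K) ⊗ Λ(M)`, where `σ` and
`τ` are two reflections in the two-dimensional representation of the symmetric group `S₃`. This
separates the two exterior powers. The words `l_a r_b` of weight two are separated by the
commutative algebra `(K ⊕ M) ⊗ (K ⊕ M)` built from square-zero extensions, which kills `r_a r_b`.
-/

open scoped TensorProduct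

theorem sq_add_choose_two (n : ℕ) : n ^ 2 + n.choose 2 = (3 * n ^ 2 - n) / 2 := by
  have hchoose : 2 * n.choose 2 + n = n ^ 2 := by
    induction n with
    | zero => rfl
    | succ n ih =>
      rw [Nat.choose_succ_succ, Nat.choose_one_right]
      linarith
  omega

theorem range_mul'_comp_map {R M N A : Type*} [CommSemiring R] [AddCommMonoid M] [Module R M]
    [AddCommMonoid N] [Module R N] [Semiring A] [Algebra R A] (f : M →ₗ[R] A) (g : N →ₗ[R] A) :
    (LinearMap.mul' R A ∘ₗ TensorProduct.map f g).range = f.range * g.range := by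
  rw [LinearMap.range_comp, TensorProduct.range_map, Submodule.map_map₂, Submodule.mul_eq_map₂]
  rfl

theorem prod_ofFn_tmul {R S T : Type*} [CommSemiring R] [Semiring S] [Algebra R S] [Semiring T]
    [Algebra R T] (s : S) {k : ℕ} (f : Fin k → T) :
    (List.ofFn fun i => s ⊗ₜ[R] f i).prod = (s ^ k) ⊗ₜ[R] (List.ofFn f).prod := by
  induction k with
  | zero => simp [Algebra.TensorProduct.one_def]
  | succ k ih => simp [List.ofFn_succ, ih, pow_succ']

/-- The defining relations of the enveloping algebra of a module `M` with zero product, for the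
images `l a` and `r a` of the left and right multiplications in an algebra `A`. Algebra maps
`U(K^n) → A` amount to pairs `(l, r)` satisfying them. -/
structure EnvelopingRelations {R M A : Type*} [CommRing R] [AddCommGroup M] [Module R M] [Ring A]
    [Algebra R A] (l r : M →ₗ[R] A) : Prop where
  left_mul_self (a : M) : l a * l a = 0
  right_mul_self (a : M) : r a * r a = 0
  left_mul_left_add_right_mul_right (a b : M) : l b * l a + r a * r b = 0
  right_mul_left_sub (a b : M) : r b * l a - l a * r b - r a * r b = 0

namespace EnvelopingRelations

variable {R M A : Type*} [CommRing R] [AddCommGroup M] [Module R M] [Ring A] [Algebra R A]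
  {l r : M →ₗ[R] A}

theorem left_mul_left_anticomm (h : EnvelopingRelations l r) (a b : M) :
    l a * l b = -(l b * l a) := by
  have hsum := h.left_mul_self (a + b)
  simp only [map_add, add_mul, mul_add, h.left_mul_self, zero_add, add_zero] at hsum
  exact eq_neg_of_add_eq_zero_right hsum

theorem left_mul_left (h : EnvelopingRelations l r) (a b : M) : l a * l b = r a * r b := by
  rw [h.left_mul_left_anticomm, neg_eq_iff_add_eq_zero]
  exact h.left_mul_left_add_right_mul_right a b

theorem right_mul_left (h : EnvelopingRelations l r) (a b : M) :
    r b * l a = l a * r b + r a * r b := by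
  rw [← sub_eq_zero, ← sub_sub]
  exact h.right_mul_left_sub a b

theorem range_left_mul_range_left_le (h : EnvelopingRelations l r) :
    l.range * l.range ≤ r.range * r.range := by
  rw [Submodule.mul_le]
  rintro _ ⟨a, rfl⟩ _ ⟨b, rfl⟩
  rw [h.left_mul_left]
  exact Submodule.mul_mem_mul ⟨a, rfl⟩ ⟨b, rfl⟩

theorem range_right_mul_range_left_le (h : EnvelopingRelations l r) :
    r.range * l.range ≤ l.range * r.range ⊔ r.range * r.range := by
  rw [Submodule.mul_le]
  rintro _ ⟨b, rfl⟩ _ ⟨a, rfl⟩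
  rw [h.right_mul_left]
  exact Submodule.add_mem_sup (Submodule.mul_mem_mul ⟨a, rfl⟩ ⟨b, rfl⟩)
    (Submodule.mul_mem_mul ⟨a, rfl⟩ ⟨b, rfl⟩)

theorem range_sup_range_mul_self (h : EnvelopingRelations l r) :
    (l.range ⊔ r.range) * (l.range ⊔ r.range) = (l.range ⊔ r.range) * r.range := by
  refine le_antisymm ?_ (mul_le_mul' le_rfl le_sup_right)
  rw [Submodule.mul_sup, Submodule.sup_mul, Submodule.sup_mul _ _ r.range]
  exact sup_le (sup_le (h.range_left_mul_range_left_le.trans le_sup_right)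
    h.range_right_mul_range_left_le) le_rfl

theorem range_sup_range_pow_succ (h : EnvelopingRelations l r) (k : ℕ) :
    (l.range ⊔ r.range) ^ (k + 1) = l.range * r.range ^ k ⊔ r.range ^ (k + 1) := by
  rw [pow_succ' r.range, ← Submodule.sup_mul]
  induction k with
  | zero => rw [zero_add, pow_one, pow_zero, mul_one]
  | succ k ih => rw [pow_succ', ih, ← mul_assoc, h.range_sup_range_mul_self, mul_assoc, ← pow_succ']

/-- The algebra map `ExteriorAlgebra R M → A` extending `r`, which exists because `r a` squares to
zero. -/
def rightHom (h : EnvelopingRelations l r) : ExteriorAlgebra R M →ₐ[R] A :=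
  ExteriorAlgebra.lift R ⟨r, h.right_mul_self⟩

theorem rightHom_ιMulti (h : EnvelopingRelations l r) {k : ℕ} (v : Fin k → M) :
    h.rightHom (ExteriorAlgebra.ιMulti R k v) = (List.ofFn fun i => r (v i)).prod := by
  simp [rightHom, ExteriorAlgebra.ιMulti_apply, map_list_prod, List.map_ofFn, Function.comp_def]

/-- The linear map `a₁ ∧ ⋯ ∧ aₖ ↦ r a₁ ⋯ r aₖ`. -/
def rightPower (h : EnvelopingRelations l r) (k : ℕ) : ⋀[R]^k M →ₗ[R] A :=
  h.rightHom.toLinearMap ∘ₗ (⋀[R]^k M).subtype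

theorem rightPower_ιMulti (h : EnvelopingRelations l r) {k : ℕ} (v : Fin k → M) :
    h.rightPower k (exteriorPower.ιMulti R k v) = (List.ofFn fun i => r (v i)).prod :=
  h.rightHom_ιMulti v

theorem range_rightPower (h : EnvelopingRelations l r) (k : ℕ) :
    (h.rightPower k).range = r.range ^ k := by
  have hr : r = h.rightHom.toLinearMap ∘ₗ ExteriorAlgebra.ι R := by
    ext a
    simp [rightHom]
  rw [rightPower, LinearMap.range_comp, Submodule.range_subtype, ExteriorAlgebra.exteriorPower,
    Submodule.map_pow, ← LinearMap.range_comp, ← hr]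

variable (l r) in
/-- The multilinear map `(a₀, …, aₖ) ↦ l a₀ * r a₁ ⋯ r aₖ`. -/
def leftRightWord (k : ℕ) : MultilinearMap R (fun _ : Fin (k + 1) => M) A :=
  (MultilinearMap.mkPiAlgebraFin R (k + 1) A).compLinearMap (Fin.cons l fun _ => r)

variable (l r) in
theorem leftRightWord_apply {k : ℕ} (v : Fin (k + 1) → M) :
    leftRightWord l r k v = l (v 0) * (List.ofFn fun i => r (Fin.tail v i)).prod := by
  simp [leftRightWord, Fin.tail]

theorem leftRightWord_eq_zero_of_not_injective_tail (h : EnvelopingRelations l r)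
    {k : ℕ} {v : Fin (k + 1) → M} (hv : ¬ Function.Injective (Fin.tail v)) :
    leftRightWord l r k v = 0 := by
  rw [leftRightWord_apply, ← h.rightHom_ιMulti, ExteriorAlgebra.ιMulti_eq_zero_of_not_inj hv,
    map_zero, mul_zero]

theorem leftRightWord_cons_cons_cons (h : EnvelopingRelations l r)
    {k : ℕ} (a b c : M) (v : Fin k → M) :
    leftRightWord l r (k + 2) (Fin.cons a (Fin.cons b (Fin.cons c v))) =
      l a * l b * l c * (List.ofFn fun i => r (v i)).prod := by
  have hlll : l a * l b * l c = l a * r b * r c := by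
    rw [mul_assoc, h.left_mul_left, mul_assoc]
  rw [leftRightWord_apply, hlll]
  simp [mul_assoc]

theorem leftRightWord_eq_zero_of_not_injective (h : EnvelopingRelations l r)
    {k : ℕ} {v : Fin (k + 3) → M} (hv : ¬ Function.Injective v) :
    leftRightWord l r (k + 2) v = 0 := by
  induction v using Fin.consCases with | _ a v
  induction v using Fin.consCases with | _ b v
  induction v using Fin.consCases with | _ c v
  by_cases hbcv : Function.Injective (Fin.cons b (Fin.cons c v) : Fin (k + 2) → M)
  · by_cases hacv : Function.Injective (Fin.cons a (Fin.cons c v) : Fin (k + 2) → M)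
    · have hab : a = b := by
        by_contra hne
        refine hv (Fin.cons_injective_iff.2 ⟨?_, hbcv⟩)
        rw [Fin.range_cons]
        exact not_or_intro hne (Fin.cons_injective_iff.1 hacv).1
      rw [h.leftRightWord_cons_cons_cons, hab, h.left_mul_self, zero_mul, zero_mul]
    · have hswap : leftRightWord l r (k + 2) (Fin.cons b (Fin.cons a (Fin.cons c v))) = 0 :=
        h.leftRightWord_eq_zero_of_not_injective_tail hacv
      rw [h.leftRightWord_cons_cons_cons] at hswap ⊢
      rw [h.left_mul_left_anticomm, neg_mul, neg_mul, hswap, neg_zero]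
  · exact h.leftRightWord_eq_zero_of_not_injective_tail hbcv

/-- The linear map `a₀ ∧ ⋯ ∧ aₖ₊₂ ↦ l a₀ * r a₁ ⋯ r aₖ₊₂` induced by `leftRightWord`. It is only
defined from degree three on: `l a * r a` need not vanish. -/
def leftRightPower (h : EnvelopingRelations l r) (k : ℕ) : ⋀[R]^(k + 3) M →ₗ[R] A :=
  exteriorPower.alternatingMapLinearEquiv
    { leftRightWord l r (k + 2) with
      map_eq_zero_of_eq' := fun _ _ _ hij hne =>
        h.leftRightWord_eq_zero_of_not_injective fun hinj => hne (hinj hij) }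

theorem leftRightPower_ιMulti (h : EnvelopingRelations l r) {k : ℕ} (v : Fin (k + 3) → M) :
    h.leftRightPower k (exteriorPower.ιMulti R (k + 3) v) =
      l (v 0) * h.rightPower (k + 2) (exteriorPower.ιMulti R (k + 2) (Fin.tail v)) := by
  rw [leftRightPower, exteriorPower.alternatingMapLinearEquiv_apply_ιMulti, rightPower_ιMulti]
  exact leftRightWord_apply l r v

theorem range_leftRightPower (h : EnvelopingRelations l r) (k : ℕ) :
    (h.leftRightPower k).range = l.range * r.range ^ (k + 2) := by
  rw [← h.range_rightPower]
  apply le_antisymm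
  · rw [LinearMap.range_eq_map, ← exteriorPower.ιMulti_span, Submodule.map_span_le]
    rintro _ ⟨v, rfl⟩
    rw [h.leftRightPower_ιMulti]
    exact Submodule.mul_mem_mul ⟨_, rfl⟩ ⟨_, rfl⟩
  · rw [LinearMap.range_eq_map (h.rightPower _), ← exteriorPower.ιMulti_span, Submodule.map_span,
      ← l.range.span_eq, Submodule.span_mul_span, Submodule.span_le]
    rintro _ ⟨_, ⟨a, rfl⟩, _, ⟨_, ⟨v, rfl⟩, rfl⟩, rfl⟩
    exact ⟨exteriorPower.ιMulti R (k + 3) (Fin.cons a v), h.leftRightPower_ιMulti _⟩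

section Naturality

variable {B : Type*} [Ring B] [Algebra R B] {l' r' : M →ₗ[R] B}
  (h : EnvelopingRelations l r) (h' : EnvelopingRelations l' r') (f : A →ₐ[R] B)

theorem map_rightPower (hr : ∀ a, f (r a) = r' a) {k : ℕ} (x : ⋀[R]^k M) :
    f (h.rightPower k x) = h'.rightPower k x := by
  suffices f.toLinearMap ∘ₗ h.rightPower k = h'.rightPower k from LinearMap.congr_fun this x
  ext v
  simp [rightPower_ιMulti, map_list_prod, List.map_ofFn, Function.comp_def, hr]

theorem map_leftRightPower (hl : ∀ a, f (l a) = l' a) (hr : ∀ a, f (r a) = r' a) {k : ℕ}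
    (x : ⋀[R]^(k + 3) M) : f (h.leftRightPower k x) = h'.leftRightPower k x := by
  suffices f.toLinearMap ∘ₗ h.leftRightPower k = h'.leftRightPower k from
    LinearMap.congr_fun this x
  ext v
  simp [leftRightPower_ιMulti, hl, h.map_rightPower h' f hr]

end Naturality

end EnvelopingRelations

section Models

variable (R M : Type*) [CommRing R] [AddCommGroup M] [Module R M]

theorem envelopingRelations_zero (A : Type*) [Ring A] [Algebra R A] :
    EnvelopingRelations (0 : M →ₗ[R] A) 0 := by
  constructor <;> simp

section Tensor

variable {S : Type*} [Ring S] [Algebra R S] {s t : S}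

/-- The linear map `a ↦ s ⊗ a` into the exterior algebra with coefficients in `S`. -/
def tmulι (s : S) : M →ₗ[R] S ⊗[R] ExteriorAlgebra R M :=
  TensorProduct.mk R S (ExteriorAlgebra R M) s ∘ₗ ExteriorAlgebra.ι R

theorem tmulι_apply (s : S) (a : M) : tmulι R M s a = s ⊗ₜ ExteriorAlgebra.ι R a :=
  rfl

theorem envelopingRelations_tmulι (hsq : s * s = t * t) (hsum : t * s + s * t + t * t = 0) :
    EnvelopingRelations (tmulι R M s) (tmulι R M t) where
  left_mul_self a := by simp [tmulι_apply]
  right_mul_self a := by simp [tmulι_apply]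
  left_mul_left_add_right_mul_right a b := by
    simp [tmulι_apply, hsq, ← TensorProduct.tmul_add]
  right_mul_left_sub a b := by
    have hanti : ExteriorAlgebra.ι R b * ExteriorAlgebra.ι R a =
        -(ExteriorAlgebra.ι R a * ExteriorAlgebra.ι R b) :=
      eq_neg_of_add_eq_zero_left (ExteriorAlgebra.ι_add_mul_swap b a)
    simp only [tmulι_apply, Algebra.TensorProduct.tmul_mul_tmul, hanti, TensorProduct.tmul_neg]
    rw [← neg_add', ← neg_add', ← TensorProduct.add_tmul, ← TensorProduct.add_tmul, hsum,
      TensorProduct.zero_tmul, neg_zero]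

variable {R M}

theorem rightPower_tmulι (h : EnvelopingRelations (tmulι R M s) (tmulι R M t)) {k : ℕ}
    (x : ⋀[R]^k M) : h.rightPower k x = (t ^ k) ⊗ₜ (x : ExteriorAlgebra R M) := by
  suffices h.rightPower k = TensorProduct.mk R S _ (t ^ k) ∘ₗ Submodule.subtype _ from
    LinearMap.congr_fun this x
  ext v
  simp [h.rightPower_ιMulti, tmulι_apply, prod_ofFn_tmul, ExteriorAlgebra.ιMulti_apply]

theorem leftRightPower_tmulι (h : EnvelopingRelations (tmulι R M s) (tmulι R M t)) {k : ℕ}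
    (x : ⋀[R]^(k + 3) M) :
    h.leftRightPower k x = (s * t ^ (k + 2)) ⊗ₜ (x : ExteriorAlgebra R M) := by
  suffices h.leftRightPower k = TensorProduct.mk R S _ (s * t ^ (k + 2)) ∘ₗ Submodule.subtype _
    from LinearMap.congr_fun this x
  ext v
  simp [h.leftRightPower_ιMulti, rightPower_tmulι, tmulι_apply, ExteriorAlgebra.ιMulti_succ_apply,
    Fin.tail_def, Matrix.vecTail, Function.comp_def]

end Tensor

/-- A reflection `σ` in the two-dimensional representation of the symmetric group `S₃`. Together
with the reflection `τ = rightReflection` it satisfies `σ² = τ² = 1`, and `τσ + στ = -1` because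
`στ` is a rotation of order three. -/
def leftReflection : Matrix (Fin 2) (Fin 2) R := !![0, 1; 1, 0]

/-- The reflection `τ` paired with `leftReflection`, in a basis whose second vector it fixes. -/
def rightReflection : Matrix (Fin 2) (Fin 2) R := !![-1, 0; -1, 1]

theorem envelopingRelations_reflections :
    EnvelopingRelations (tmulι R M (leftReflection R)) (tmulι R M (rightReflection R)) := by
  apply envelopingRelations_tmulι <;>
    simp [leftReflection, rightReflection, ← Matrix.ext_iff]

theorem rightReflection_pow_col_one (k : ℕ) : (rightReflection R ^ k).col 1 = ![0, 1] := by
  induction k with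
  | zero => ext i; fin_cases i <;> simp
  | succ k ih =>
    rw [pow_succ', ← Matrix.mulVec_single_one, ← Matrix.mulVec_mulVec, Matrix.mulVec_single_one, ih]
    ext i; fin_cases i <;> simp [rightReflection]

theorem leftReflection_mul_rightReflection_pow_col_one (k : ℕ) :
    (leftReflection R * rightReflection R ^ k).col 1 = ![1, 0] := by
  rw [← Matrix.mulVec_single_one, ← Matrix.mulVec_mulVec, Matrix.mulVec_single_one,
    rightReflection_pow_col_one]
  ext i; fin_cases i <;> simp [leftReflection]

/-- The second column of a matrix with coefficients in a module `N`, where such matrices are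
encoded as the tensor product of the scalar matrices with `N`. -/
def colOne (N : Type*) [AddCommGroup N] [Module R N] :
    Matrix (Fin 2) (Fin 2) R ⊗[R] N →ₗ[R] N × N :=
  (TensorProduct.lid R N ∘ₗ (Matrix.entryLinearMap R R 0 1).rTensor N).prod
    (TensorProduct.lid R N ∘ₗ (Matrix.entryLinearMap R R 1 1).rTensor N)

variable {R} in
theorem colOne_tmul {N : Type*} [AddCommGroup N] [Module R N] (X : Matrix (Fin 2) (Fin 2) R)
    (x : N) : colOne R N (X ⊗ₜ x) = (X.col 1 0 • x, X.col 1 1 • x) := by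
  simp [colOne]

variable [Module Rᵐᵒᵖ M] [IsCentralScalar R M]

/-- The inclusion of `M` into the first factor of `(R ⊕ M) ⊗ (R ⊕ M)`, where `R ⊕ M` is the
trivial square-zero extension. -/
def squareZeroLeft : M →ₗ[R] TrivSqZeroExt R M ⊗[R] TrivSqZeroExt R M :=
  Algebra.TensorProduct.includeLeft.toLinearMap ∘ₗ TrivSqZeroExt.inrHom R M

/-- The inclusion of `M` into the second factor of `(R ⊕ M) ⊗ (R ⊕ M)`. -/
def squareZeroRight : M →ₗ[R] TrivSqZeroExt R M ⊗[R] TrivSqZeroExt R M :=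
  Algebra.TensorProduct.includeRight.toLinearMap ∘ₗ TrivSqZeroExt.inrHom R M

theorem envelopingRelations_squareZero :
    EnvelopingRelations (squareZeroLeft R M) (squareZeroRight R M) := by
  constructor <;> simp [squareZeroLeft, squareZeroRight]

end Models

namespace Ualg

variable (K : Type) [CommRing K] (n : ℕ)

/-- The quotient map from the tensor algebra to `U(K^n)`. -/
def mk : TensorAlgebra K ((Fin n → K) × (Fin n → K)) →ₐ[K] Ualg K n :=
  RingQuot.mkAlgHom K (URel K n)

variable {K n} in
theorem mk_eq_of_rel {x y : TensorAlgebra K ((Fin n → K) × (Fin n → K))} (h : URel K n x y) :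
    mk K n x = mk K n y :=
  RingQuot.mkAlgHom_rel K h

/-- The map `lU` as a linear map. -/
def left : (Fin n → K) →ₗ[K] Ualg K n :=
  (mk K n).toLinearMap ∘ₗ TensorAlgebra.ι K ∘ₗ LinearMap.inl K _ _

/-- The map `rU` as a linear map. -/
def right : (Fin n → K) →ₗ[K] Ualg K n :=
  (mk K n).toLinearMap ∘ₗ TensorAlgebra.ι K ∘ₗ LinearMap.inr K _ _

theorem V_eq_range_sup_range : V K n = (left K n).range ⊔ (right K n).range := by
  rw [V, Submodule.span_union]
  exact congrArg₂ _ (left K n).range.span_eq (right K n).range.span_eq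

theorem envelopingRelations : EnvelopingRelations (left K n) (right K n) where
  left_mul_self a := by simpa [left, lT] using mk_eq_of_rel (.ll a)
  right_mul_self a := by simpa [right, rT] using mk_eq_of_rel (.rr a)
  left_mul_left_add_right_mul_right a b := by
    simpa [left, right, lT, rT] using mk_eq_of_rel (.llrr a b)
  right_mul_left_sub a b := by
    simpa [left, right, lT, rT] using mk_eq_of_rel (.rl a b)

variable {K n} {A : Type*} [Ring A] [Algebra K A] {l r : (Fin n → K) →ₗ[K] A}

/-- The universal property of `U(K^n)`. -/
def lift (h : EnvelopingRelations l r) : Ualg K n →ₐ[K] A :=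
  RingQuot.liftAlgHom K (s := URel K n) ⟨TensorAlgebra.lift K (l.coprod r), by
    rintro _ _ (a | a | ⟨a, b⟩ | ⟨a, b⟩)
    · simpa [lT] using h.left_mul_self a
    · simpa [rT] using h.right_mul_self a
    · simpa [lT, rT] using h.left_mul_left_add_right_mul_right a b
    · simpa [lT, rT] using h.right_mul_left_sub a b⟩

theorem lift_left (h : EnvelopingRelations l r) (a : Fin n → K) : lift h (left K n a) = l a :=
  (RingQuot.liftAlgHom_mkAlgHom_apply K _ _ _).trans (by simp)

theorem lift_right (h : EnvelopingRelations l r) (a : Fin n → K) : lift h (right K n a) = r a :=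
  (RingQuot.liftAlgHom_mkAlgHom_apply K _ _ _).trans (by simp)

variable (K n)

/-- The representation of `U(K^n)` on two copies of the exterior algebra in which `l_a` and `r_a`
act by left multiplication by `a` twisted by the two reflections. -/
def reflectionRep : Ualg K n →ₐ[K]
    Matrix (Fin 2) (Fin 2) K ⊗[K] ExteriorAlgebra K (Fin n → K) :=
  lift (envelopingRelations_reflections K (Fin n → K))

/-- The image of the second basis vector under `reflectionRep`. The two components read off the
exterior powers spanned by the words `l_a r_b r_c ⋯` and `r_a r_b r_c ⋯`. -/
def exteriorPart :
    Ualg K n →ₗ[K] ExteriorAlgebra K (Fin n → K) × ExteriorAlgebra K (Fin n → K) :=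
  colOne K _ ∘ₗ (reflectionRep K n).toLinearMap

variable {K n} in
theorem exteriorPart_left (a : Fin n → K) :
    exteriorPart K n (left K n a) = (ExteriorAlgebra.ι K a, 0) := by
  simp [exteriorPart, reflectionRep, lift_left, tmulι_apply, colOne_tmul, leftReflection]

variable {K n} in
theorem exteriorPart_right (a : Fin n → K) :
    exteriorPart K n (right K n a) = (0, ExteriorAlgebra.ι K a) := by
  simp [exteriorPart, reflectionRep, lift_right, tmulι_apply, colOne_tmul, rightReflection]

variable {K n} in
theorem exteriorPart_rightPower {k : ℕ} (x : ⋀[K]^k (Fin n → K)) :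
    exteriorPart K n ((envelopingRelations K n).rightPower k x) =
      (0, (x : ExteriorAlgebra K (Fin n → K))) := by
  have hrep : reflectionRep K n ((envelopingRelations K n).rightPower k x) = _ :=
    (envelopingRelations K n).map_rightPower (envelopingRelations_reflections K _) _
      (lift_right _) x
  simp [exteriorPart, hrep, rightPower_tmulι, colOne_tmul, rightReflection_pow_col_one,
    -Matrix.col_apply]

variable {K n} in
theorem exteriorPart_leftRightPower {k : ℕ} (x : ⋀[K]^(k + 3) (Fin n → K)) :
    exteriorPart K n ((envelopingRelations K n).leftRightPower k x) =
      ((x : ExteriorAlgebra K (Fin n → K)), 0) := by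
  have hrep : reflectionRep K n ((envelopingRelations K n).leftRightPower k x) = _ :=
    (envelopingRelations K n).map_leftRightPower (envelopingRelations_reflections K _) _
      (lift_left _) (lift_right _) x
  simp [exteriorPart, hrep, leftRightPower_tmulι, colOne_tmul,
    leftReflection_mul_rightReflection_pow_col_one, -Matrix.col_apply]

/-- The component in `M ⊗ M` of the map from `U(K^n)` to `(K ⊕ M) ⊗ (K ⊕ M)`, for `M = K^n`. It
sees the words `l_a r_b`, on which `exteriorPart` is not injective. -/
def tensorPart : Ualg K n →ₗ[K] (Fin n → K) ⊗[K] (Fin n → K) :=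
  TensorProduct.map (TrivSqZeroExt.sndHom K _) (TrivSqZeroExt.sndHom K _) ∘ₗ
    (lift (envelopingRelations_squareZero K (Fin n → K))).toLinearMap

/-- The linear map `a ⊗ b ↦ l_a r_b`. -/
def leftMulRight : (Fin n → K) ⊗[K] (Fin n → K) →ₗ[K] Ualg K n :=
  LinearMap.mul' K (Ualg K n) ∘ₗ TensorProduct.map (left K n) (right K n)

variable {K n} in
theorem tensorPart_leftMulRight (x : (Fin n → K) ⊗[K] (Fin n → K)) :
    tensorPart K n (leftMulRight K n x) = x := by
  suffices tensorPart K n ∘ₗ leftMulRight K n = LinearMap.id from LinearMap.congr_fun this x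
  ext
  simp [tensorPart, leftMulRight, lift_left, lift_right, squareZeroLeft, squareZeroRight]

variable {K n} in
theorem tensorPart_rightPower (x : ⋀[K]^2 (Fin n → K)) :
    tensorPart K n ((envelopingRelations K n).rightPower 2 x) = 0 := by
  suffices tensorPart K n ∘ₗ (envelopingRelations K n).rightPower 2 = 0 from
    LinearMap.congr_fun this x
  ext v
  simp [tensorPart, EnvelopingRelations.rightPower_ιMulti, lift_right, squareZeroRight]

theorem algebraMap_injective : Function.Injective (algebraMap K (Ualg K n)) :=
  Function.LeftInverse.injective (g := lift (envelopingRelations_zero K (Fin n → K) K))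
    (AlgHom.commutes _)

theorem coprod_left_right_injective :
    Function.Injective ((left K n).coprod (right K n)) := by
  rw [injective_iff_map_eq_zero]
  rintro ⟨a, b⟩ hab
  have hpart := congrArg (exteriorPart K n) hab
  simpa [exteriorPart_left, exteriorPart_right] using hpart

theorem coprod_leftMulRight_rightPower_injective :
    Function.Injective ((leftMulRight K n).coprod ((envelopingRelations K n).rightPower 2)) := by
  rw [injective_iff_map_eq_zero]
  rintro ⟨x, y⟩ hxy
  have hx : x = 0 := by
    simpa [tensorPart_leftMulRight, tensorPart_rightPower] using congrArg (tensorPart K n) hxy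
  have hy : y = 0 := by
    simpa [hx, exteriorPart_rightPower] using congrArg (exteriorPart K n) hxy
  rw [hx, hy, Prod.mk_zero_zero]

theorem coprod_leftRightPower_rightPower_injective (k : ℕ) :
    Function.Injective (((envelopingRelations K n).leftRightPower k).coprod
      ((envelopingRelations K n).rightPower (k + 3))) := by
  rw [injective_iff_map_eq_zero]
  rintro ⟨x, y⟩ hxy
  simpa [exteriorPart_leftRightPower, exteriorPart_rightPower] using
    congrArg (exteriorPart K n) hxy

theorem V_pow_succ (k : ℕ) :
    V K n ^ (k + 1) =
      (left K n).range * (right K n).range ^ k ⊔ (right K n).range ^ (k + 1) := by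
  rw [V_eq_range_sup_range, (envelopingRelations K n).range_sup_range_pow_succ]

/-- The weight-zero component consists of the scalars. -/
def weightZeroEquiv : K ≃ₗ[K] ↥(V K n ^ 0) :=
  LinearEquiv.ofInjective (Algebra.linearMap K (Ualg K n)) (algebraMap_injective K n) ≪≫ₗ
    LinearEquiv.ofEq _ _ (by rw [pow_zero, Submodule.one_eq_range])

/-- The weight-one component, via `(a, b) ↦ l_a + r_b`. -/
def weightOneEquiv : ((Fin n → K) × (Fin n → K)) ≃ₗ[K] ↥(V K n ^ 1) :=
  LinearEquiv.ofInjective _ (coprod_left_right_injective K n) ≪≫ₗ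
    LinearEquiv.ofEq _ _ (by rw [LinearMap.range_coprod, pow_one, V_eq_range_sup_range])

/-- The weight-two component, via `(a ⊗ b, c ∧ d) ↦ l_a r_b + r_c r_d`. -/
def weightTwoEquiv :
    ((Fin n → K) ⊗[K] (Fin n → K) × ⋀[K]^2 (Fin n → K)) ≃ₗ[K] ↥(V K n ^ 2) :=
  LinearEquiv.ofInjective _ (coprod_leftMulRight_rightPower_injective K n) ≪≫ₗ
    LinearEquiv.ofEq _ _ (by
      rw [LinearMap.range_coprod, leftMulRight, range_mul'_comp_map,
        EnvelopingRelations.range_rightPower, V_pow_succ, pow_one])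

/-- The components of weight at least three are two copies of an exterior power, spanned by the
words `l_a r_b r_c ⋯` and `r_a r_b r_c ⋯`. -/
def weightAddThreeEquiv (k : ℕ) :
    (⋀[K]^(k + 3) (Fin n → K) × ⋀[K]^(k + 3) (Fin n → K)) ≃ₗ[K] ↥(V K n ^ (k + 3)) :=
  LinearEquiv.ofInjective _ (coprod_leftRightPower_rightPower_injective K n k) ≪≫ₗ
    LinearEquiv.ofEq _ _ (by
      rw [LinearMap.range_coprod, EnvelopingRelations.range_leftRightPower,
        EnvelopingRelations.range_rightPower, V_pow_succ])

end Ualg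

theorem dim_weight_component_general (K : Type) [CommRing K] [Nontrivial K] (n k : ℕ) :
    Module.finrank K ↥(V K n ^ k) =
      if k = 0 then 1
      else if k = 1 then 2 * n
      else if k = 2 then (3 * n ^ 2 - n) / 2
      else 2 * n.choose k := by
  match k with
  | 0 => simp [← (Ualg.weightZeroEquiv K n).finrank_eq]
  | 1 => simp [← (Ualg.weightOneEquiv K n).finrank_eq, two_mul]
  | 2 => simp [← (Ualg.weightTwoEquiv K n).finrank_eq, exteriorPower.finrank_eq,
      ← sq_add_choose_two, ← sq]
  | k + 3 => simp [← (Ualg.weightAddThreeEquiv K n k).finrank_eq, exteriorPower.finrank_eq,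
      two_mul]

/-- The weight-`k` component `U(K^n)_k` of the universal enveloping algebra of the
abelian alternative algebra `K^n` has dimension `1, 2n, (3n²−n)/2, 2·(n choose k)`
for `k = 0, 1, 2, k ≥ 3` respectively. -/
theorem dim_weight_component (K : Type) [Field K] (n k : ℕ) :
    Module.finrank K ↥(V K n ^ k) =
      if k = 0 then 1
      else if k = 1 then 2 * n
      else if k = 2 then (3 * n ^ 2 - n) / 2
      else 2 * n.choose k :=
  dim_weight_component_general K n k

end
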